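/- Let K be a countably infinite field and let E ⊆ K² be a set with positive upper Banach density (with respect to the additive group (K²,+)). Then Prod(E − E) = K, where Prod(S) = {xy : (x,y) ∈ S} for S ⊆ K². Moreover, for every finite set Q ⊆ K there exists u_Q ∈ E such that Q ⊆ Prod(E − u_Q). -/

import Mathlib

open Filter Topology Pointwise
open scoped Classical

/-- A (additive) Følner sequence in a countable abelian group. -/
def IsAddFolner {A : Type*} [AddCommGroup A] (F : ℕ → Finset A) : Prop :=
  (∀ n, (F n).Nonempty) ∧
    ∀ a : A, Tendsto
      (fun n => ((F n ∩ (F n).image (· + a)).card : ℝ) / ((F n).card : ℝ)) atTop (𝓝 1)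

/-- `E` has positive upper Banach density. -/
def PosUpperBanachDensity {A : Type*} [AddCommGroup A] (E : Set A) : Prop :=
  ∃ F : ℕ → Finset A, IsAddFolner F ∧
    0 < limsup (fun n => (((F n).filter (· ∈ E)).card : ℝ) / ((F n).card : ℝ)) atTop

/-!
Fix an averaging scheme along which every set has a density. The correlation function of
`1_D - β`, where `D` has density `β > 0`, is positive definite on `K²` and equals `-β²` off
`D - D`. Suppose that `D - D` misses the hyperbola `x y = q` with `q ≠ 0`. The positive definite
functions equal to `-β²` on this hyperbola and with prescribed value at `0` form a compact convex
set preserved by the commuting maps `(x, y) ↦ (t x, t⁻¹ y)`, so by Markov–Kakutani one of them,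
`χ`, is invariant.

Write `χ (x - y) = ⟪v x, v y⟫` in a Hilbert space. As `t → ∞`, the vectors `v (t, q / t)` converge
weakly to a limit `m q` with `⟪m q, v 0⟫ = χ (1, q)`, and `⟪m q, m r⟫` does not depend on `q` and
`r`. Hence all the `m q` coincide, and `χ` is constant off the axes with value `‖m q‖² ≥ 0`, which
contradicts `χ (1, q) = -β² < 0`.

For the pinned version, if no `u ∈ E` works for `Q` then the sets of those `u ∈ E` for which a
given `q ∈ Q` is not attained cover `E`; one of them has positive density, and its differences
attain `q`.
-/

universe u v

open scoped ComplexOrder InnerProductSpace ComplexConjugate in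
theorem exists_gram_eq_of_posSemidef {𝕜 : Type u} {X : Type v} [RCLike 𝕜] {M : Matrix X X 𝕜}
    (hM : M.PosSemidef) :
    ∃ (H : Type (max u v)) (_ : NormedAddCommGroup H) (_ : InnerProductSpace 𝕜 H)
      (_ : CompleteSpace H) (v : X → H), Matrix.gram 𝕜 v = M := by
  set K : Matrix X X (𝕜 →L[𝕜] 𝕜) := Matrix.of fun x y ↦ M x y • (1 : 𝕜 →L[𝕜] 𝕜)
  have hconj (x y : X) : conj (M x y) = M y x := hM.isHermitian.apply y x
  have hK : K.PosSemidef := by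
    refine (List.TFAE.out (RKHS.posSemidef_tfae (K := K)) 0 2 rfl rfl).2 ⟨?_, fun w ↦ ?_⟩
    · ext x y : 1
      simp only [K, Matrix.conjTranspose_apply, Matrix.of_apply, star_smul, star_one,
        RCLike.star_def, hconj]
    · simpa [K, hconj, mul_comm, mul_left_comm] using (RCLike.nonneg_iff.1 (hM.2 w)).1
  have : Fact K.PosSemidef := ⟨hK⟩
  refine ⟨RKHS.OfKernel K, inferInstance, inferInstance, inferInstance,
    fun x ↦ RKHS.kerFun (RKHS.OfKernel K) x 1, ?_⟩
  ext x y
  rw [Matrix.gram_apply, ← RKHS.kernel_inner, RKHS.OfKernel.kernel_ofKernel]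
  simp [K, hconj]

section MarkovKakutani

variable {E : Type*} [AddCommGroup E] [Module ℝ E]

theorem birkhoffAverage_id_mem {C : Set E} (hC : Convex ℝ C) {f : E → E}
    (hf : Set.MapsTo f C C) {x : E} (hx : x ∈ C) {n : ℕ} (hn : n ≠ 0) :
    birkhoffAverage ℝ f id n x ∈ C := by
  rw [birkhoffAverage, birkhoffSum, Finset.smul_sum]
  refine hC.sum_mem (fun _ _ ↦ by positivity) ?_ fun k _ ↦ hf.iterate k hx
  simp [hn]

theorem map_birkhoffAverage_id_sub (T : E →ₗ[ℝ] E) (n : ℕ) (x : E) :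
    T (birkhoffAverage ℝ T id n x) - birkhoffAverage ℝ T id n x =
      (n : ℝ)⁻¹ • (T^[n] x - x) := by
  have hT : T (birkhoffAverage ℝ T id n x) = birkhoffAverage ℝ T id n (T x) := by
    simp only [birkhoffAverage, birkhoffSum, id, map_smul, map_sum,
      ← Function.iterate_succ_apply, Function.iterate_succ_apply']
  rw [hT, birkhoffAverage_apply_sub_birkhoffAverage, id, id]

variable [TopologicalSpace E] [IsTopologicalAddGroup E] [ContinuousSMul ℝ E] [T2Space E]

theorem exists_isFixedPt_of_mapsTo (T : E →L[ℝ] E) {C : Set E} (hC : IsCompact C)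
    (hconv : Convex ℝ C) (hne : C.Nonempty) (hT : Set.MapsTo T C C) :
    ∃ x ∈ C, Function.IsFixedPt T x := by
  obtain ⟨x₀, hx₀⟩ := hne
  set a : ℕ → E := fun n ↦ birkhoffAverage ℝ T id n x₀
  have ha : ∀ᶠ n in hyperfilter ℕ, a n ∈ C :=
    Nat.hyperfilter_le_atTop <| (eventually_ne_atTop 0).mono fun n hn ↦
      birkhoffAverage_id_mem hconv hT hx₀ hn
  obtain ⟨x, hxC, hx⟩ := hC.ultrafilter_le_nhds' ((hyperfilter ℕ).map a) ha
  have hbdd : Bornology.IsVonNBounded ℝ (C - C) := (hC.isVonNBounded ℝ).sub (hC.isVonNBounded ℝ)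
  have hdiff : Tendsto (fun n ↦ T (a n) - a n) (hyperfilter ℕ) (𝓝 0) := by
    simp_rw [a, ← ContinuousLinearMap.coe_coe T, map_birkhoffAverage_id_sub]
    exact (hbdd.smul_tendsto_zero (.of_forall fun n ↦ Set.sub_mem_sub (hT.iterate n hx₀) hx₀)
      tendsto_inv_atTop_nhds_zero_nat).mono_left Nat.hyperfilter_le_atTop
  exact ⟨x, hxC, sub_eq_zero.1 <| tendsto_nhds_unique
    (((T.continuous.tendsto x).comp hx).sub hx) hdiff⟩

theorem exists_forall_mem_isFixedPt_of_mapsTo {ι : Type*} {T : ι → E →L[ℝ] E}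
    (hcomm : ∀ i j, Commute (T i) (T j)) (s : Finset ι) {C : Set E} (hC : IsCompact C)
    (hconv : Convex ℝ C) (hne : C.Nonempty) (hT : ∀ i, Set.MapsTo (T i) C C) :
    ∃ x ∈ C, ∀ i ∈ s, Function.IsFixedPt (T i) x := by
  induction s using Finset.induction generalizing C with
  | empty => exact hne.imp fun x hx ↦ ⟨hx, by simp⟩
  | insert i s _ ih =>
    have hfix : Convex ℝ (Function.fixedPoints (T i)) :=
      (LinearMap.eqLocus (T i : E →ₗ[ℝ] E) LinearMap.id).convex
    have hmaps (j : ι) : Set.MapsTo (T j) (C ∩ Function.fixedPoints (T i))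
        (C ∩ Function.fixedPoints (T i)) := fun x hx ↦
      ⟨hT j hx.1, Function.IsFixedPt.map hx.2 (DFunLike.congr_fun (hcomm j i))⟩
    obtain ⟨x, hx, hxs⟩ := ih (hC.inter_right (isClosed_fixedPoints (T i).continuous))
      (hconv.inter hfix) (exists_isFixedPt_of_mapsTo (T i) hC hconv hne (hT i)) hmaps
    exact ⟨x, hx.1, Finset.forall_mem_insert .. |>.2 ⟨hx.2, hxs⟩⟩

theorem exists_forall_isFixedPt_of_mapsTo {ι : Type*} {T : ι → E →L[ℝ] E}
    (hcomm : ∀ i j, Commute (T i) (T j)) {C : Set E} (hC : IsCompact C)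
    (hconv : Convex ℝ C) (hne : C.Nonempty) (hT : ∀ i, Set.MapsTo (T i) C C) :
    ∃ x ∈ C, ∀ i, Function.IsFixedPt (T i) x := by
  obtain ⟨x, hxC, hx⟩ := hC.inter_iInter_nonempty (fun i ↦ Function.fixedPoints (T i))
    (fun i ↦ isClosed_fixedPoints (T i).continuous) fun s ↦ by
      simpa [Set.Nonempty, Set.mem_iInter] using
        exists_forall_mem_isFixedPt_of_mapsTo hcomm s hC hconv hne hT
  exact ⟨x, hxC, fun i ↦ Set.mem_iInter.1 hx i⟩

end MarkovKakutani

section WeakLimits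

open scoped InnerProductSpace

variable {𝕜 H ι : Type*} [RCLike 𝕜] [NormedAddCommGroup H] [InnerProductSpace 𝕜 H]
  [CompleteSpace H] {v : ι → H} {R : ℝ}

theorem exists_tendsto_inner_ultrafilter (U : Ultrafilter ι) (hv : ∀ i, ‖v i‖ ≤ R) :
    ∃ m : H, ∀ w, Tendsto (fun i ↦ ⟪v i, w⟫_𝕜) U (𝓝 ⟪m, w⟫_𝕜) := by
  set φ : ι → WeakDual 𝕜 H :=
    fun i ↦ StrongDual.toWeakDual (InnerProductSpace.toDual 𝕜 H (v i))
  have hφ : ∀ᶠ i in U, φ i ∈ WeakDual.toStrongDual ⁻¹' Metric.closedBall 0 R :=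
    .of_forall fun i ↦ by simpa [φ] using hv i
  have hcompact := WeakDual.isCompact_closedBall (𝕜 := 𝕜) (E := H) 0 R
  obtain ⟨ℓ, -, hℓ⟩ := hcompact.ultrafilter_le_nhds' (U.map φ) hφ
  refine ⟨(InnerProductSpace.toDual 𝕜 H).symm ℓ.toStrongDual, fun w ↦ ?_⟩
  simpa [φ, Function.comp_def] using (WeakDual.eval_continuous w).tendsto ℓ |>.comp hℓ

theorem exists_tendsto_inner {l : Filter ι} [l.NeBot] (hv : ∀ i, ‖v i‖ ≤ R)
    (hlim : ∀ j, ∃ c, Tendsto (fun i ↦ ⟪v i, v j⟫_𝕜) l (𝓝 c)) :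
    ∃ m : H, ∀ w, Tendsto (fun i ↦ ⟪v i, w⟫_𝕜) l (𝓝 ⟪m, w⟫_𝕜) := by
  obtain ⟨m, hm⟩ := exists_tendsto_inner_ultrafilter (𝕜 := 𝕜) (Ultrafilter.of l) hv
  refine ⟨m, fun w ↦ (tendsto_iff_ultrafilter ..).2 fun U hU ↦ ?_⟩
  obtain ⟨m', hm'⟩ := exists_tendsto_inner_ultrafilter (𝕜 := 𝕜) U hv
  have horth (j : ι) : ⟪m - m', v j⟫_𝕜 = 0 := by
    obtain ⟨c, hc⟩ := hlim j
    rw [inner_sub_left, tendsto_nhds_unique (hm (v j)) (hc.mono_left (Ultrafilter.of_le l)),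
      tendsto_nhds_unique (hm' (v j)) (hc.mono_left hU), sub_self]
  have hzero {m₀ : H} {U : Ultrafilter ι}
      (h : ∀ w, Tendsto (fun i ↦ ⟪v i, w⟫_𝕜) U (𝓝 ⟪m₀, w⟫_𝕜)) : ⟪m₀, m - m'⟫_𝕜 = 0 := by
    refine tendsto_nhds_unique (h (m - m')) ?_
    simp_rw [inner_eq_zero_symm.1 (horth _)]
    exact tendsto_const_nhds
  have heq : m - m' = 0 := by
    rw [← inner_self_eq_zero (𝕜 := 𝕜), inner_sub_left, hzero hm, hzero hm', sub_self]
  exact sub_eq_zero.1 heq ▸ hm' w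

end WeakLimits

section Hyperbola

theorem finite_setOf_quadratic_eq_zero {R : Type*} [CommRing R] [IsDomain R] {a b c : R}
    (h : a ≠ 0 ∨ b ≠ 0 ∨ c ≠ 0) : {t | a * t ^ 2 + b * t + c = 0}.Finite := by
  have hp : (Cubic.mk 0 a b c).toPoly ≠ 0 := by
    rcases h with h | h | h
    exacts [Cubic.ne_zero_of_b_ne_zero h, Cubic.ne_zero_of_c_ne_zero h,
      Cubic.ne_zero_of_d_ne_zero h]
  simpa [Polynomial.IsRoot, Cubic.toPoly] using Polynomial.finite_setOfPred_isRoot hp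

theorem tendsto_sub_mul_div_sub_cofinite {K : Type*} [Field K] {q : K} (hq : q ≠ 0) {p : K × K}
    (hp : p ≠ 0) : Tendsto (fun t ↦ (t - p.1) * (q / t - p.2)) cofinite cofinite := by
  refine Tendsto.cofinite_of_finite_preimage_singleton fun c ↦ Set.Finite.to_subtype ?_
  have hcoeff : -p.2 ≠ 0 ∨ q + p.1 * p.2 - c ≠ 0 ∨ -(p.1 * q) ≠ 0 := by
    by_contra! h
    exact hp (Prod.ext (by simpa [hq] using h.2.2) (by simpa using h.1))
  refine ((finite_setOf_quadratic_eq_zero hcoeff).insert 0).subset fun t ht ↦ ?_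
  rcases eq_or_ne t 0 with h0 | h0
  · exact .inl h0
  · right
    simp only [Set.mem_preimage, Set.mem_singleton_iff] at ht
    simp only [Set.mem_ofPred_eq]
    field_simp at ht
    linear_combination ht

end Hyperbola

section PositiveDefinite

variable {A : Type u} [AddCommGroup A] {ψ : A → ℝ}

/-- A real function on an abelian group is positive definite if all the matrices
`ψ (x i - x j)` are positive semidefinite. The group itself indexes the matrix, since
`Matrix.PosSemidef` quantifies over finitely supported vectors. -/
def IsPosDef (ψ : A → ℝ) : Prop :=
  (Matrix.of fun x y ↦ ψ (x - y)).PosSemidef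

theorem isClosed_setOf_posSemidef {X : Type*} :
    IsClosed {M : Matrix X X ℝ | M.PosSemidef} := by
  simp only [Matrix.PosSemidef, Set.ofPred_and, Set.ofPred_forall]
  refine .inter (isClosed_eq (by fun_prop) (by fun_prop)) (isClosed_iInter fun w ↦ ?_)
  simp only [Finsupp.sum]
  exact isClosed_le (by fun_prop) (by fun_prop)

theorem isClosed_setOf_isPosDef : IsClosed {ψ : A → ℝ | IsPosDef ψ} :=
  isClosed_setOf_posSemidef.preimage (by fun_prop)

theorem convex_setOf_isPosDef : Convex ℝ {ψ : A → ℝ | IsPosDef ψ} :=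
  fun _ hψ _ hχ _ _ ha hb _ ↦ (Matrix.PosSemidef.smul hψ ha).add (Matrix.PosSemidef.smul hχ hb)

namespace IsPosDef

theorem comp_addMonoidHom {B : Type*} [AddCommGroup B] (hψ : IsPosDef ψ) (f : B →+ A) :
    IsPosDef (ψ ∘ f) := by
  simpa only [IsPosDef, Matrix.submatrix, Matrix.of_apply, ← map_sub]
    using! Matrix.PosSemidef.submatrix hψ f

open scoped InnerProductSpace in
theorem exists_inner_eq (hψ : IsPosDef ψ) :
    ∃ (H : Type u) (_ : NormedAddCommGroup H) (_ : InnerProductSpace ℝ H) (_ : CompleteSpace H)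
      (v : A → H), ∀ x y, ⟪v x, v y⟫_ℝ = ψ (x - y) := by
  obtain ⟨H, _, _, _, v, hv⟩ := exists_gram_eq_of_posSemidef hψ
  exact ⟨H, ‹_›, ‹_›, ‹_›, v, fun x y ↦ congrFun₂ hv x y⟩

theorem abs_apply_le (hψ : IsPosDef ψ) (x : A) : |ψ x| ≤ ψ 0 := by
  obtain ⟨H, _, _, _, v, hv⟩ := hψ.exists_inner_eq
  have hnorm (y : A) : ‖v y‖ ^ 2 = ψ 0 := by rw [← real_inner_self_eq_norm_sq, hv, sub_self]
  have h := abs_real_inner_le_norm (v x) (v 0)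
  rw [hv, sub_zero] at h
  nlinarith [hnorm x, hnorm 0, sq_nonneg (‖v x‖ - ‖v 0‖)]

theorem exists_invariant_eqOn {ι : Type*} {f : ι → AddMonoid.End A}
    (hf : ∀ i j, Commute (f i) (f j)) {S : Set A} (hS : ∀ i, Set.MapsTo (f i) S S)
    (hψ : IsPosDef ψ) (hψS : ∀ i, Set.EqOn (ψ ∘ f i) ψ S) :
    ∃ χ, IsPosDef χ ∧ (∀ i, χ ∘ f i = χ) ∧ Set.EqOn χ ψ S := by
  set C : Set (A → ℝ) := {χ | IsPosDef χ} ∩ Set.pi (insert 0 S) fun x ↦ {ψ x}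
  set T : ι → (A → ℝ) →L[ℝ] (A → ℝ) := fun i ↦ .pi fun x ↦ .proj (f i x)
  have hclosed : IsClosed C :=
    isClosed_setOf_isPosDef.inter (isClosed_set_pi fun _ _ ↦ isClosed_singleton)
  have hcompact : IsCompact C :=
    (isCompact_univ_pi fun _ ↦ isCompact_Icc (a := -ψ 0) (b := ψ 0)).of_isClosed_subset hclosed
      fun χ hχ x _ ↦ abs_le.1 (hχ.2 0 (.inl rfl) ▸ hχ.1.abs_apply_le x)
  have hconvex : Convex ℝ C :=
    convex_setOf_isPosDef.inter (convex_pi fun _ _ ↦ convex_singleton _)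
  have hmaps (i : ι) : Set.MapsTo (T i) C C := by
    rintro χ ⟨hχ, hχS⟩
    refine ⟨hχ.comp_addMonoidHom (f i), fun x hx ↦ ?_⟩
    rcases hx with rfl | hx
    · simpa [T] using hχS 0 (.inl rfl)
    · exact (hχS _ (.inr (hS i hx))).trans (hψS i hx)
  have hcomm (i j : ι) : Commute (T i) (T j) := by
    ext χ x
    exact congrArg χ (DFunLike.congr_fun (hf j i) x)
  obtain ⟨χ, ⟨hχ, hχS⟩, hfix⟩ :=
    exists_forall_isFixedPt_of_mapsTo hcomm hcompact hconvex ⟨ψ, hψ, fun _ _ ↦ rfl⟩ hmaps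
  exact ⟨χ, hχ, hfix, fun x hx ↦ hχS x (.inr hx)⟩

end IsPosDef

end PositiveDefinite

section HyperbolicRotation

open scoped InnerProductSpace

variable {K : Type u} [Field K]

/-- The hyperbolic rotation `(x, y) ↦ (t x, t⁻¹ y)` of the plane `K²`, which preserves every
hyperbola `x y = q`. -/
def hyperbolicRotation (t : Kˣ) : AddMonoid.End (K × K) :=
  (AddMonoidHom.mulLeft (t : K)).prodMap (AddMonoidHom.mulLeft (↑t⁻¹ : K))

@[simp]
theorem hyperbolicRotation_apply (t : Kˣ) (p : K × K) :
    hyperbolicRotation t p = (t * p.1, ↑t⁻¹ * p.2) := rfl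

theorem hyperbolicRotation_fst_mul_snd (t : Kˣ) (p : K × K) :
    (hyperbolicRotation t p).1 * (hyperbolicRotation t p).2 = p.1 * p.2 := by
  rw [hyperbolicRotation_apply, mul_mul_mul_comm, Units.mul_inv, one_mul]

theorem commute_hyperbolicRotation (s t : Kˣ) :
    Commute (hyperbolicRotation s) (hyperbolicRotation t) :=
  AddMonoidHom.ext fun _ ↦ Prod.ext (mul_left_comm ..) (mul_left_comm ..)

variable {χ : K × K → ℝ}

theorem apply_eq_apply_one_of_invariant (hχ : ∀ t, χ ∘ hyperbolicRotation t = χ) {p : K × K}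
    (hp : p.1 ≠ 0) : χ p = χ (1, p.1 * p.2) := by
  simpa [hp] using congrFun (hχ (Units.mk0 p.1 hp)) (1, p.1 * p.2)

theorem apply_zero_eq_of_invariant (hχ : ∀ t, χ ∘ hyperbolicRotation t = χ) {y : K}
    (hy : y ≠ 0) : χ (0, y) = χ (0, 1) := by
  simpa [hy] using (congrFun (hχ (Units.mk0 y hy)) (0, y)).symm

theorem exists_tendsto_inner_hyperbola [Infinite K]
    {H : Type*} [NormedAddCommGroup H] [InnerProductSpace ℝ H] [CompleteSpace H] {v : K × K → H}
    (hv : ∀ x y, ⟪v x, v y⟫_ℝ = χ (x - y)) (hχ : ∀ t, χ ∘ hyperbolicRotation t = χ) {L : ℝ}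
    (hL : Tendsto (fun s ↦ χ (1, s)) cofinite (𝓝 L)) {q : K} (hq : q ≠ 0) :
    ∃ m : H, (∀ w, Tendsto (fun t ↦ ⟪v (t, q / t), w⟫_ℝ) cofinite (𝓝 ⟪m, w⟫_ℝ)) ∧
      ⟪m, v 0⟫_ℝ = χ (1, q) ∧ ∀ p ≠ 0, ⟪m, v p⟫_ℝ = L := by
  have hzero : Tendsto (fun t ↦ ⟪v (t, q / t), v 0⟫_ℝ) cofinite (𝓝 (χ (1, q))) := by
    refine tendsto_const_nhds.congr' ?_
    filter_upwards [eventually_cofinite_ne 0] with t ht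
    rw [hv, sub_zero, apply_eq_apply_one_of_invariant hχ (p := (t, q / t)) ht, mul_div_cancel₀ _ ht]
  have hne (p : K × K) (hp : p ≠ 0) :
      Tendsto (fun t ↦ ⟪v (t, q / t), v p⟫_ℝ) cofinite (𝓝 L) := by
    refine (hL.comp (tendsto_sub_mul_div_sub_cofinite hq hp)).congr' ?_
    filter_upwards [eventually_cofinite_ne p.1] with t ht
    rw [hv, apply_eq_apply_one_of_invariant hχ (sub_ne_zero.2 ht)]
    rfl
  have hnorm (t : K) : ‖v (t, q / t)‖ ≤ √(χ 0) := by
    rw [norm_eq_sqrt_real_inner, hv, sub_self]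
  obtain ⟨m, hm⟩ := exists_tendsto_inner (𝕜 := ℝ) (l := cofinite) hnorm fun t ↦ by
    rcases eq_or_ne (t, q / t) 0 with h | h
    · exact ⟨_, h ▸ hzero⟩
    · exact ⟨_, hne _ h⟩
  exact ⟨m, hm, tendsto_nhds_unique (hm _) hzero, fun p hp ↦ tendsto_nhds_unique (hm _) (hne p hp)⟩

namespace IsPosDef

theorem exists_tendsto_cofinite_of_invariant [Infinite K] (hpos : IsPosDef χ)
    (hχ : ∀ t, χ ∘ hyperbolicRotation t = χ) :
    ∃ L, Tendsto (fun s ↦ χ (1, s)) cofinite (𝓝 L) := by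
  obtain ⟨H, _, _, _, v, hv⟩ := hpos.exists_inner_eq
  have hnorm (s : K) : ‖v (0, s)‖ ≤ √(χ 0) := by
    rw [norm_eq_sqrt_real_inner, hv, sub_self]
  obtain ⟨m, hm⟩ := exists_tendsto_inner (𝕜 := ℝ) (l := cofinite) hnorm fun s ↦ by
    refine ⟨χ (0, 1), tendsto_const_nhds.congr' ?_⟩
    filter_upwards [eventually_cofinite_ne s] with t ht
    rw [hv, Prod.mk_sub_mk, sub_zero, apply_zero_eq_of_invariant hχ (sub_ne_zero.2 ht)]
  exact ⟨_, by simpa [hv] using hm (v (-1, 0))⟩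

theorem nonneg_of_invariant [Infinite K] (hpos : IsPosDef χ)
    (hχ : ∀ t, χ ∘ hyperbolicRotation t = χ) {q : K} (hq : q ≠ 0) : 0 ≤ χ (1, q) := by
  obtain ⟨H, _, _, _, v, hv⟩ := hpos.exists_inner_eq
  obtain ⟨L, hL⟩ := hpos.exists_tendsto_cofinite_of_invariant hχ
  choose! m hm hm_zero hm_ne using
    fun r : K ↦ exists_tendsto_inner_hyperbola hv hχ hL (q := r)
  have hinner {r s : K} (hr : r ≠ 0) (hs : s ≠ 0) : ⟪m r, m s⟫_ℝ = L := by
    rw [real_inner_comm]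
    refine tendsto_nhds_unique (hm s hs (m r)) (tendsto_const_nhds.congr' ?_)
    filter_upwards [eventually_cofinite_ne 0] with t ht
    rw [real_inner_comm, hm_ne r hr _ fun h ↦ ht (congrArg Prod.fst h)]
  have hm_eq {r : K} (hr : r ≠ 0) : m r = m q := by
    rw [← sub_eq_zero, ← inner_self_eq_zero (𝕜 := ℝ)]
    simp only [inner_sub_left, inner_sub_right, hinner hr hr, hinner hr hq, hinner hq hr,
      hinner hq hq, sub_self]
  have hconst : Tendsto (fun r ↦ χ (1, r)) cofinite (𝓝 (χ (1, q))) := by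
    refine tendsto_const_nhds.congr' ?_
    filter_upwards [eventually_cofinite_ne 0] with r hr
    rw [← hm_zero r hr, hm_eq hr, hm_zero q hq]
  rw [tendsto_nhds_unique hconst hL, ← hinner hq hq]
  exact real_inner_self_nonneg

theorem nonneg_of_eqOn_hyperbola [Infinite K] {ψ : K × K → ℝ} (hψ : IsPosDef ψ) {q : K}
    (hq : q ≠ 0) {c : ℝ} (hc : ∀ p : K × K, p.1 * p.2 = q → ψ p = c) : 0 ≤ c := by
  have hmaps (t : Kˣ) : Set.MapsTo (hyperbolicRotation t) {p : K × K | p.1 * p.2 = q}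
      {p | p.1 * p.2 = q} := fun p hp ↦
    (hyperbolicRotation_fst_mul_snd t p).trans hp
  obtain ⟨χ, hχ, hinv, hχψ⟩ := hψ.exists_invariant_eqOn commute_hyperbolicRotation hmaps
    fun t p hp ↦ (hc _ (hmaps t hp)).trans (hc p hp).symm
  rw [← hc (1, q) (one_mul q), ← hχψ (one_mul q)]
  exact hχ.nonneg_of_invariant hinv hq

end IsPosDef

end HyperbolicRotation

section Folner

open scoped BigOperators

theorem posSemidef_of_mul {X : Type*} (f : X → ℝ) :
    (Matrix.of fun x y ↦ f x * f y).PosSemidef := by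
  refine ⟨Matrix.ext fun x y ↦ mul_comm (f y) (f x), fun w ↦ ?_⟩
  have hsq : (w.sum fun x a ↦ w.sum fun y b ↦ star a * (f x * f y) * b) =
      (w.sum fun x a ↦ a * f x) ^ 2 := by
    simp only [Finsupp.sum, sq, Finset.sum_mul_sum, star_trivial]
    exact Finset.sum_congr rfl fun x _ ↦ Finset.sum_congr rfl fun y _ ↦ by ring
  exact (sq_nonneg _).trans_eq hsq.symm

theorem posSemidef_expect_mul {X ι : Type*} (s : Finset ι) (f : X → ι → ℝ) :
    (Matrix.of fun x y ↦ 𝔼 z ∈ s, f x z * f y z).PosSemidef := by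
  have hsum : (∑ z ∈ s, Matrix.of fun x y ↦ f x z * f y z).PosSemidef :=
    Matrix.posSemidef_sum s fun z _ ↦ posSemidef_of_mul fun x ↦ f x z
  convert hsum.smul (inv_nonneg.2 (Nat.cast_nonneg (α := ℝ) s.card)) using 1
  ext x y
  simp [Finset.expect_eq_sum_div_card, Matrix.sum_apply, div_eq_inv_mul]

theorem abs_sum_sub_sum_le {ι : Type*} {s t : Finset ι} (hst : s.card = t.card) {g : ι → ℝ}
    {C : ℝ} (hg : ∀ x, |g x| ≤ C) :
    |∑ x ∈ s, g x - ∑ x ∈ t, g x| ≤ 2 * C * (s.card - (s ∩ t).card) := by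
  have habs (u : Finset ι) : |∑ x ∈ u, g x| ≤ u.card * C := by
    simpa using (Finset.abs_sum_le_sum_abs g u).trans
      (Finset.sum_le_card_nsmul u _ C fun x _ ↦ hg x)
  have hcard (u w : Finset ι) : ((u \ w).card : ℝ) = u.card - (u ∩ w).card :=
    eq_sub_of_add_eq (by exact_mod_cast Finset.card_sdiff_add_card_inter u w)
  calc |∑ x ∈ s, g x - ∑ x ∈ t, g x|
      = |∑ x ∈ s \ t, g x - ∑ x ∈ t \ s, g x| := by rw [Finset.sum_sdiff_sub_sum_sdiff]
    _ ≤ (s \ t).card * C + (t \ s).card * C := (abs_sub _ _).trans (add_le_add (habs _) (habs _))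
    _ = 2 * C * (s.card - (s ∩ t).card) := by
      rw [hcard s, hcard t, Finset.inter_comm t, hst]; ring

theorem exists_tendsto_expect {A ι : Type*} (U : Ultrafilter ι) (F : ι → Finset A) {g : A → ℝ}
    {C : ℝ} (hg : ∀ x, |g x| ≤ C) :
    ∃ c, Tendsto (fun i ↦ 𝔼 x ∈ F i, g x) U (𝓝 c) := by
  have hmem : ∀ᶠ i in U, 𝔼 x ∈ F i, g x ∈ Set.Icc (-|C|) |C| := .of_forall fun i ↦ by
    rcases (F i).eq_empty_or_nonempty with h | h
    · simp [h]
    · exact abs_le.1 <| (Finset.abs_expect_le _ _).trans <|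
        Finset.expect_le h fun x _ ↦ (hg x).trans (le_abs_self C)
  obtain ⟨c, -, hc⟩ := isCompact_Icc.ultrafilter_le_nhds' (U.map fun i ↦ 𝔼 x ∈ F i, g x) hmem
  exact ⟨c, hc⟩

variable {A : Type u} {F : ℕ → Finset A}

/-- `D` has density `β` along the filter `l` on the indices of the averaging sets `F n`. It
is used along an ultrafilter, where every set has a density. -/
def HasDensity (F : ℕ → Finset A) (l : Filter ℕ) (D : Set A) (β : ℝ) : Prop :=
  Tendsto (fun n ↦ 𝔼 z ∈ F n, D.indicator 1 z) l (𝓝 β)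

theorem abs_indicator_one_le (D : Set A) (z : A) : |D.indicator (1 : A → ℝ) z| ≤ 1 := by
  simpa using norm_indicator_le_norm_self (s := D) (1 : A → ℝ) z

theorem exists_hasDensity (F : ℕ → Finset A) (U : Ultrafilter ℕ) (D : Set A) :
    ∃ β, HasDensity F U D β :=
  exists_tendsto_expect U F (abs_indicator_one_le D)

theorem HasDensity.exists_ne_zero_of_subset_biUnion {U : Ultrafilter ℕ} {E : Set A} {β : ℝ}
    (hE : HasDensity F U E β) (hβ : 0 < β) {ι : Type*} {s : Finset ι} {D : ι → Set A}
    (hED : E ⊆ ⋃ i ∈ s, D i) : ∃ i ∈ s, ∃ γ ≠ 0, HasDensity F U (D i) γ := by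
  by_contra! h
  have hD (i : ι) (hi : i ∈ s) : HasDensity F U (D i) 0 := by
    obtain ⟨γ, hγ⟩ := exists_hasDensity F U (D i)
    rwa [not_imp_not.1 (h i hi γ) hγ] at hγ
  have hnonneg (i : ι) (z : A) : 0 ≤ (D i).indicator (1 : A → ℝ) z :=
    Set.indicator_nonneg (fun _ _ ↦ zero_le_one' ℝ) z
  have hle (z : A) : E.indicator (1 : A → ℝ) z ≤ ∑ i ∈ s, (D i).indicator 1 z := by
    refine Set.indicator_le' (fun z hz ↦ ?_)
      (fun z _ ↦ Finset.sum_nonneg fun i _ ↦ hnonneg i z) z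
    obtain ⟨i, hi, hzi⟩ := Set.mem_iUnion₂.1 (hED hz)
    calc (1 : ℝ) = (D i).indicator 1 z := (Set.indicator_of_mem hzi 1).symm
      _ ≤ ∑ i ∈ s, (D i).indicator 1 z :=
        Finset.single_le_sum (fun j _ ↦ hnonneg j z) hi
  have hsum : Tendsto (fun n ↦ 𝔼 z ∈ F n, ∑ i ∈ s, (D i).indicator (1 : A → ℝ) z) U (𝓝 0) := by
    simpa only [Finset.expect_sum_comm, Finset.sum_const_zero] using tendsto_finsetSum s hD
  exact hβ.not_ge <| le_of_tendsto_of_tendsto' hE hsum fun n ↦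
    Finset.expect_le_expect fun z _ ↦ hle z

variable [AddCommGroup A]

theorem IsAddFolner.tendsto_expect_add_sub_expect (hF : IsAddFolner F) {g : A → ℝ} {C : ℝ}
    (hg : ∀ x, |g x| ≤ C) (a : A) :
    Tendsto (fun n ↦ 𝔼 x ∈ F n, g (x + a) - 𝔼 x ∈ F n, g x) atTop (𝓝 0) := by
  have hlim : Tendsto (fun n ↦ 2 * C * (1 - ((F n ∩ (F n).image (· + a)).card : ℝ) / (F n).card))
      atTop (𝓝 0) := by
    simpa using ((hF.2 a).const_sub 1).const_mul (2 * C)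
  refine squeeze_zero_norm (fun n ↦ ?_) hlim
  have hcard : (0 : ℝ) < (F n).card := by exact_mod_cast (hF.1 n).card_pos
  have hinj : Function.Injective (· + a) := add_left_injective a
  have h := abs_sum_sub_sum_le (Finset.card_image_of_injective (F n) hinj).symm hg
  rw [Finset.sum_image hinj.injOn, abs_sub_comm] at h
  rw [Finset.expect_eq_sum_div_card, Finset.expect_eq_sum_div_card, ← sub_div, Real.norm_eq_abs,
    abs_div, abs_of_pos hcard, div_le_iff₀ hcard]
  refine h.trans_eq ?_
  field_simp

theorem IsAddFolner.exists_isPosDef_tendsto_expect (hF : IsAddFolner F) {U : Ultrafilter ℕ}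
    (hU : ↑U ≤ (atTop : Filter ℕ)) {g : A → ℝ} {C : ℝ} (hg : ∀ x, |g x| ≤ C) :
    ∃ ψ : A → ℝ, IsPosDef ψ ∧
      ∀ p, Tendsto (fun n ↦ 𝔼 z ∈ F n, g (z + p) * g z) U (𝓝 (ψ p)) := by
  have hmul (p z : A) : |g (z + p) * g z| ≤ C * C := by
    rw [abs_mul]
    exact mul_le_mul (hg _) (hg _) (abs_nonneg _) ((abs_nonneg _).trans (hg z))
  choose ψ hψ using fun p ↦ exists_tendsto_expect U F (hmul p)
  have hshift (x y : A) :
      Tendsto (fun n ↦ 𝔼 z ∈ F n, g (z + x) * g (z + y)) U (𝓝 (ψ (x - y))) := by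
    simpa [add_assoc] using
      ((hF.tendsto_expect_add_sub_expect (hmul (x - y)) y).mono_left hU).add (hψ (x - y))
  have hpos : Matrix.of (fun x y ↦ ψ (x - y)) ∈ {M : Matrix A A ℝ | M.PosSemidef} :=
    isClosed_setOf_posSemidef.mem_of_tendsto
      (tendsto_pi_nhds.2 fun x ↦ tendsto_pi_nhds.2 (hshift x))
      (.of_forall fun n ↦ posSemidef_expect_mul (F n) fun x z ↦ g (z + x))
  exact ⟨ψ, hpos, hψ⟩

theorem PosUpperBanachDensity.exists_pos_hasDensity {E : Set A} (hE : PosUpperBanachDensity E) :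
    ∃ F : ℕ → Finset A, IsAddFolner F ∧ ∃ U : Ultrafilter ℕ, ↑U ≤ (atTop : Filter ℕ) ∧
      ∃ β > 0, HasDensity F U E β := by
  obtain ⟨F, hF, hlim⟩ := hE
  obtain ⟨δ, hδ, hδlim⟩ := exists_between hlim
  set d : ℕ → ℝ := fun n ↦ ((F n).filter (· ∈ E)).card / (F n).card
  have hd (n : ℕ) : d n = 𝔼 z ∈ F n, E.indicator 1 z := by
    simp [d, Finset.expect_eq_sum_div_card, Set.indicator_apply]
  have hcobdd : IsCoboundedUnder (· ≤ ·) atTop d :=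
    (isBoundedUnder_of ⟨0, fun n ↦ by positivity⟩ : IsBoundedUnder (· ≥ ·) atTop d)
      |>.isCoboundedUnder_le
  have hne : (atTop ⊓ 𝓟 {n | δ < d n}).NeBot :=
    frequently_mem_iff_neBot.1 (frequently_lt_of_lt_limsup hcobdd hδlim)
  have hU := le_inf_iff.1 (Ultrafilter.of_le (atTop ⊓ 𝓟 {n | δ < d n}))
  obtain ⟨β, hβ⟩ := exists_hasDensity F (Ultrafilter.of (atTop ⊓ 𝓟 {n | δ < d n})) E
  refine ⟨F, hF, _, hU.1, β, hδ.trans_le (ge_of_tendsto hβ ?_), hβ⟩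
  filter_upwards [le_principal_iff.1 hU.2] with n hn
  exact hd n ▸ hn.le

theorem IsAddFolner.exists_isPosDef_of_hasDensity (hF : IsAddFolner F) {U : Ultrafilter ℕ}
    (hU : ↑U ≤ (atTop : Filter ℕ)) {D : Set A} {β : ℝ} (hD : HasDensity F U D β) :
    ∃ ψ : A → ℝ, IsPosDef ψ ∧ ∀ p ∉ D - D, ψ p = -β ^ 2 := by
  set b : A → ℝ := D.indicator 1
  have hbound (z : A) : |b z - β| ≤ 1 + |β| :=
    (abs_sub _ _).trans (add_le_add_left (abs_indicator_one_le D z) _)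
  obtain ⟨ψ, hψ, hlim⟩ := hF.exists_isPosDef_tendsto_expect hU hbound
  refine ⟨ψ, hψ, fun p hp ↦ tendsto_nhds_unique (hlim p) ?_⟩
  have hmul (z : A) : b (z + p) * b z = 0 := by
    by_contra h
    have hmem := mul_ne_zero_iff.1 h
    exact hp ⟨z + p, Set.mem_of_indicator_ne_zero hmem.1, z,
      Set.mem_of_indicator_ne_zero hmem.2, add_sub_cancel_left z p⟩
  have hexpect (n : ℕ) : 𝔼 z ∈ F n, (b (z + p) - β) * (b z - β) =
      β ^ 2 - β * 𝔼 z ∈ F n, b (z + p) - β * 𝔼 z ∈ F n, b z := by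
    rw [Finset.mul_expect, Finset.mul_expect, ← Finset.expect_const (hF.1 n) (β ^ 2),
      ← Finset.expect_sub_distrib, ← Finset.expect_sub_distrib]
    exact Finset.expect_congr rfl fun z _ ↦ by linear_combination hmul z
  have hshift : Tendsto (fun n ↦ 𝔼 z ∈ F n, b (z + p)) U (𝓝 β) := by
    simpa using ((hF.tendsto_expect_add_sub_expect (abs_indicator_one_le D) p).mono_left hU).add hD
  simp_rw [hexpect]
  convert ((hshift.const_mul β).const_sub (β ^ 2)).sub (hD.const_mul β) using 2
  ring

end Folner

section Products

variable {K : Type u} [Field K] [Infinite K]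

theorem IsAddFolner.exists_mem_sub_of_hasDensity {F : ℕ → Finset (K × K)} (hF : IsAddFolner F)
    {U : Ultrafilter ℕ} (hU : ↑U ≤ (atTop : Filter ℕ)) {D : Set (K × K)} {β : ℝ} (hβ : β ≠ 0)
    (hD : HasDensity F U D β) (q : K) : ∃ p ∈ D - D, p.1 * p.2 = q := by
  rcases eq_or_ne q 0 with rfl | hq
  · have hne : D.Nonempty := by
      by_contra! h
      exact hβ (tendsto_nhds_unique hD (by simp [h]))
    exact ⟨0, hne.zero_mem_sub, mul_zero 0⟩
  · by_contra! h
    obtain ⟨ψ, hψ, hψD⟩ := hF.exists_isPosDef_of_hasDensity hU hD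
    have := hψ.nonneg_of_eqOn_hyperbola hq fun p hp ↦ hψD p fun hpD ↦ h p hpD hp
    exact (neg_neg_of_pos (by positivity)).not_ge this

theorem PosUpperBanachDensity.exists_pin {E : Set (K × K)} (hE : PosUpperBanachDensity E)
    (Q : Finset K) : ∃ u ∈ E, ∀ q ∈ Q, ∃ v ∈ E, (v - u).1 * (v - u).2 = q := by
  by_contra! h
  obtain ⟨F, hF, U, hU, β, hβ, hEβ⟩ := hE.exists_pos_hasDensity
  set D : K → Set (K × K) := fun q ↦ {u ∈ E | ∀ v ∈ E, (v - u).1 * (v - u).2 ≠ q}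
  have hcover : E ⊆ ⋃ q ∈ Q, D q := fun u hu ↦ by
    obtain ⟨q, hq, hqu⟩ := h u hu
    exact Set.mem_biUnion hq ⟨hu, hqu⟩
  obtain ⟨q, -, γ, hγ, hDγ⟩ := hEβ.exists_ne_zero_of_subset_biUnion hβ hcover
  obtain ⟨_, ⟨v, hv, u, hu, rfl⟩, hvu⟩ := hF.exists_mem_sub_of_hasDensity hU hγ hDγ q
  exact hu.2 v hv.1 hvu

end Products

/-- For a set `E ⊆ K²` of positive upper Banach density, `Prod(E − E) = K`, and for every
finite `Q ⊆ K` there is a pin `u_Q ∈ E` with `Q ⊆ Prod(E − u_Q)`. -/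
theorem statement10
    {K : Type*} [Field K] [Countable K] [Infinite K]
    (E : Set (K × K)) (hE : PosUpperBanachDensity E) :
    (fun p : K × K => p.1 * p.2) '' (E - E) = Set.univ ∧
      ∀ Q : Finset K, ∃ u ∈ E,
        (Q : Set K) ⊆ (fun p : K × K => p.1 * p.2) '' ((fun x => x - u) '' E) := by
  refine ⟨Set.eq_univ_of_forall fun q ↦ ?_, fun Q ↦ ?_⟩
  · obtain ⟨u, hu, h⟩ := hE.exists_pin {q}
    obtain ⟨v, hv, hvu⟩ := h q (Finset.mem_singleton_self q)
    exact ⟨v - u, Set.sub_mem_sub hv hu, hvu⟩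
  · obtain ⟨u, hu, h⟩ := hE.exists_pin Q
    refine ⟨u, hu, fun q hq ↦ ?_⟩
    obtain ⟨v, hv, hvu⟩ := h q hq
    exact ⟨v - u, ⟨v, hv, rfl⟩, hvu⟩
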